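/- Let G be a connected bipartite graph with at least 3 vertices. Then H_G = [1,∞), [2,∞) ⊆ H_G^φ ⊆ [1,∞), and {1} ∪ [3,∞) ⊆ H_G^ψ ⊆ [1,∞). If moreover K_{2,2} ⊆ G ⊆ K_{2,m} for some m ≥ 2 (i.e., G is bipartite with one part of size 2, G is a subgraph of the complete bipartite graph K_{2,m} on these parts, and G contains a copy of K_{2,2}), then H_G^φ = [2,∞) and {1} ∪ [2,∞) ⊆ H_G^ψ ⊆ [1,∞). -/

import Mathlib

open Set Matrix

noncomputable section

/-- Entrywise power function `x ↦ x^α` on nonnegative reals, with the convention `0^α := 0`. -/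
def powEnt (α x : ℝ) : ℝ := if x = 0 then 0 else x ^ α

/-- The odd extension `ψ_α(x) = sgn(x)|x|^α` of the power function, with `ψ_α(0) = 0`. -/
def psiF (α x : ℝ) : ℝ := Real.sign x * |x| ^ α

/-- The even extension `φ_α(x) = |x|^α` of the power function, with `φ_α(0) = 0`. -/
def phiF (α x : ℝ) : ℝ := if x = 0 then 0 else |x| ^ α

/-- `P_G(I)`: positive semidefinite matrices with entries in `I` and zeros outside
the edge pattern of `G`. -/
def PsetG {V : Type*} [Fintype V] (G : SimpleGraph V) (I : Set ℝ) :
    Set (Matrix V V ℝ) :=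
  {A | A.PosSemidef ∧ (∀ i j, A i j ∈ I) ∧ ∀ i j, i ≠ j → ¬ G.Adj i j → A i j = 0}

/-- `H_G`: the set of entrywise powers preserving `P_G([0,∞))`. -/
def HsetG {V : Type*} [Fintype V] (G : SimpleGraph V) : Set ℝ :=
  {α | ∀ A ∈ PsetG G (Ici (0 : ℝ)), A.map (powEnt α) ∈ PsetG G univ}

/-- `H_G^ψ`: the set of powers `α` such that `ψ_α` preserves `P_G(ℝ)`. -/
def HsetPsi {V : Type*} [Fintype V] (G : SimpleGraph V) : Set ℝ :=
  {α | ∀ A ∈ PsetG G univ, A.map (psiF α) ∈ PsetG G univ}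

/-- `H_G^φ`: the set of powers `α` such that `φ_α` preserves `P_G(ℝ)`. -/
def HsetPhi {V : Type*} [Fintype V] (G : SimpleGraph V) : Set ℝ :=
  {α | ∀ A ∈ PsetG G univ, A.map (phiF α) ∈ PsetG G univ}

/-- The set of which the critical exponent is the least element:
all `α` such that every `β ≥ α` lies in `H`. -/
def CEset (H : Set ℝ) : Set ℝ := {α | ∀ β, α ≤ β → β ∈ H}

/-- The positive integers, as a set of reals. -/
def posNats : Set ℝ := {x | ∃ k : ℕ, 0 < k ∧ x = k}

/-- The odd positive integers `−1+2ℕ`, as a set of reals. -/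
def oddNats : Set ℝ := {x | ∃ k : ℕ, 0 < k ∧ x = 2 * k - 1}

/-- The even positive integers `2ℕ`, as a set of reals. -/
def evenNats : Set ℝ := {x | ∃ k : ℕ, 0 < k ∧ x = 2 * k}

/-- The square of an entry of a positive semidefinite real matrix is at most the product of the
corresponding diagonal entries. -/
lemma Matrix.PosSemidef.sq_apply_le {V : Type*} {A : Matrix V V ℝ} (hA : A.PosSemidef) (i j : V) :
    A i j ^ 2 ≤ A i i * A j j := by
  have h := (hA.submatrix ![i, j]).det_nonneg
  have hs : A j i = A i j := by simpa using hA.1.apply i j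
  rw [Matrix.det_fin_two] at h
  simp [hs] at h
  nlinarith

/-- A real symmetric matrix is positive semidefinite if its quadratic form is nonnegative. -/
lemma posSemidef_of_sum_nonneg {V : Type*} [Fintype V] {M : Matrix V V ℝ}
    (hM : ∀ i j, M j i = M i j) (h : ∀ x : V → ℝ, 0 ≤ ∑ i, ∑ j, x i * M i j * x j) :
    M.PosSemidef := by
  refine Matrix.PosSemidef.of_dotProduct_mulVec_nonneg (Matrix.IsHermitian.ext fun i j => ?_) ?_
  · simpa using hM i j
  · intro x
    simpa [dotProduct, Matrix.mulVec, Finset.mul_sum, mul_assoc] using h x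

/-- The quadratic form of a positive semidefinite real matrix is nonnegative. -/
lemma Matrix.PosSemidef.sum_nonneg {V : Type*} [Fintype V] {M : Matrix V V ℝ}
    (hM : M.PosSemidef) (x : V → ℝ) : 0 ≤ ∑ i, ∑ j, x i * M i j * x j := by
  simpa [dotProduct, Matrix.mulVec, Finset.mul_sum, mul_assoc] using
    hM.dotProduct_mulVec_nonneg x

/-- A symmetric matrix dominated off the diagonal by a diagonal congruence of a positive
semidefinite matrix with bipartite pattern, and agreeing with it on the diagonal, is positive
semidefinite. -/
lemma posSemidef_of_abs_le_of_bipartite {V : Type*} [Fintype V] {A M : Matrix V V ℝ}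
    (hA : A.PosSemidef) (s w : V → ℝ) (hs : ∀ i, s i * s i = 1)
    (hsA : ∀ i j, i ≠ j → A i j ≠ 0 → s i * s j = -1) (hM : ∀ i j, M j i = M i j)
    (hdiag : ∀ i, M i i = w i * w i * A i i)
    (hoff : ∀ i j, i ≠ j → |M i j| ≤ w i * w j * A i j) : M.PosSemidef := by
  refine posSemidef_of_sum_nonneg hM fun x => (hA.sum_nonneg fun i => s i * w i * |x i|).trans ?_
  refine Finset.sum_le_sum fun i _ => Finset.sum_le_sum fun j _ => ?_
  by_cases hij : i = j
  · subst hij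
    rw [hdiag]
    have := abs_mul_abs_self (x i)
    apply le_of_eq
    linear_combination (w i * w i * A i i * |x i| * |x i|) * hs i + w i * w i * A i i * this
  · have hb := hoff i j hij
    by_cases h0 : A i j = 0
    · have : M i j = 0 := by
        rw [h0, mul_zero] at hb
        exact abs_eq_zero.mp (le_antisymm hb (abs_nonneg _))
      simp [this, h0]
    · have h1 := hsA i j hij h0
      have h2 : |x i * M i j * x j| ≤ |x i| * |x j| * (w i * w j * A i j) := by
        rw [abs_mul, abs_mul]
        calc |x i| * |M i j| * |x j| = |x i| * |x j| * |M i j| := by ring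
          _ ≤ _ := by gcongr
      have h3 := neg_abs_le (x i * M i j * x j)
      have h4 : s i * w i * |x i| * A i j * (s j * w j * |x j|)
          = -(|x i| * |x j| * (w i * w j * A i j)) := by
        linear_combination (|x i| * |x j| * (w i * w j * A i j)) * h1
      linarith

lemma powEnt_zero (α : ℝ) : powEnt α 0 = 0 := by simp [powEnt]

lemma powEnt_of_pos (α : ℝ) {x : ℝ} (hx : 0 < x) : powEnt α x = x ^ α := by
  simp [powEnt, hx.ne']

lemma phiF_of_nonneg (α : ℝ) {x : ℝ} (hx : 0 ≤ x) : phiF α x = powEnt α x := by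
  simp [powEnt, phiF, abs_of_nonneg hx]

lemma psiF_of_nonneg (α : ℝ) {x : ℝ} (hx : 0 ≤ x) : psiF α x = powEnt α x := by
  rcases hx.eq_or_lt with rfl | h
  · simp [powEnt, psiF]
  · simp [powEnt, psiF, abs_of_pos h, h.ne', Real.sign_of_pos h]

lemma phiF_nonneg (α x : ℝ) : 0 ≤ phiF α x := by
  unfold phiF
  split_ifs <;> positivity

lemma abs_psiF (α x : ℝ) : |psiF α x| = phiF α x := by
  have h := Real.rpow_nonneg (abs_nonneg x) α
  rcases lt_trichotomy x 0 with hx | rfl | hx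
  · simp [psiF, phiF, hx.ne, Real.sign_of_neg hx, abs_of_nonneg h]
  · simp [psiF, phiF]
  · simp [psiF, phiF, hx.ne', Real.sign_of_pos hx, abs_of_nonneg h]

lemma psiF_one (x : ℝ) : psiF 1 x = x := by
  rcases lt_trichotomy x 0 with hx | rfl | hx
  · simp [psiF, Real.sign_of_neg hx, abs_of_neg hx]
  · simp [psiF]
  · simp [psiF, Real.sign_of_pos hx, abs_of_pos hx]

lemma powEnt_half_mul_self (α x : ℝ) : powEnt (α / 2) (x * x) = phiF α x := by
  by_cases hx : x = 0
  · simp [powEnt, phiF, hx]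
  · have : x * x = |x| ^ (2 : ℝ) := by simp [← pow_two]
    simp only [powEnt, phiF, mul_self_eq_zero, hx, if_false]
    rw [this, ← Real.rpow_mul (abs_nonneg x)]
    congr 1
    ring

/-- Entrywise powers at least one, with arbitrary signs off the diagonal, preserve positive
semidefiniteness of nonnegative matrices with bipartite pattern. -/
lemma posSemidef_of_abs_eq_powEnt {V : Type*} [Fintype V] {G : SimpleGraph V}
    (hbip : G.Colorable 2) {α : ℝ} (hα : 1 ≤ α) {A M : Matrix V V ℝ}
    (hA : A ∈ PsetG G (Ici 0)) (hM : ∀ i j, M j i = M i j)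
    (hdiag : ∀ i, M i i = powEnt α (A i i))
    (hoff : ∀ i j, |M i j| = powEnt α (A i j)) : M.PosSemidef := by
  obtain ⟨hpsd, hnn, hG⟩ := hA
  obtain ⟨c⟩ := hbip
  replace hnn : ∀ i j, 0 ≤ A i j := hnn
  refine posSemidef_of_abs_le_of_bipartite hpsd (fun i => if c i = 0 then 1 else -1)
    (fun i => A i i ^ ((α - 1) / 2)) (fun i => by split_ifs <;> norm_num) ?_ hM ?_ ?_
  · intro i j hij h0
    have hadj : G.Adj i j := by
      by_contra h
      exact h0 (hG i j hij h)
    have hc := c.valid hadj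
    split_ifs with h1 h2 h2
    · exact absurd (h1.trans h2.symm) hc
    · norm_num
    · norm_num
    · exact absurd (by omega) hc
  · intro i
    rw [hdiag]
    rcases (hnn i i).eq_or_lt with h | h
    · simp [← h, powEnt_zero]
    · rw [powEnt_of_pos α h, ← Real.rpow_add h]
      nth_rw 3 [← Real.rpow_one (A i i)]
      rw [← Real.rpow_add h]
      congr 1
      ring
  · intro i j _
    rw [hoff]
    rcases (hnn i j).eq_or_lt with h | h
    · simp [← h, powEnt_zero]
    · rw [powEnt_of_pos α h, ← Real.mul_rpow (hnn i i) (hnn j j)]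
      have h1 : A i j ^ α = (A i j ^ 2) ^ ((α - 1) / 2) * A i j := by
        rw [← Real.rpow_natCast, ← Real.rpow_mul h.le]
        nth_rw 3 [← Real.rpow_one (A i j)]
        rw [← Real.rpow_add h]
        congr 1
        push_cast
        ring
      rw [h1]
      exact mul_le_mul_of_nonneg_right
        (Real.rpow_le_rpow (sq_nonneg _) (hpsd.sq_apply_le i j) (by linarith)) h.le

lemma map_apply_eq_zero_of_mem_PsetG {V : Type*} [Fintype V] {G : SimpleGraph V} {I : Set ℝ}
    {A : Matrix V V ℝ} (hA : A ∈ PsetG G I) {f : ℝ → ℝ} (hf : f 0 = 0) :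
    ∀ i j, i ≠ j → ¬ G.Adj i j → A.map f i j = 0 := by
  intro i j hij h
  simp [hA.2.2 i j hij h, hf]

lemma apply_comm_of_mem_PsetG {V : Type*} [Fintype V] {G : SimpleGraph V} {I : Set ℝ}
    {A : Matrix V V ℝ} (hA : A ∈ PsetG G I) (i j : V) : A j i = A i j := by
  simpa using hA.1.1.apply i j

lemma Ici_one_subset_HsetG {V : Type*} [Fintype V] {G : SimpleGraph V} (hbip : G.Colorable 2) :
    Ici (1 : ℝ) ⊆ HsetG G := by
  intro α hα A hA
  refine ⟨posSemidef_of_abs_eq_powEnt hbip hα hA ?_ (fun i => rfl) ?_, fun _ _ => mem_univ _,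
    map_apply_eq_zero_of_mem_PsetG hA (powEnt_zero α)⟩
  · intro i j
    simp [apply_comm_of_mem_PsetG hA i j]
  · intro i j
    rw [Matrix.map_apply, abs_of_nonneg]
    rw [← phiF_of_nonneg α (hA.2.1 i j)]
    exact phiF_nonneg _ _

/-- The Hadamard square of a matrix in `P_G(ℝ)` lies in `P_G([0,∞))`. -/
lemma hadamard_self_mem_PsetG {V : Type*} [Fintype V] {G : SimpleGraph V} {A : Matrix V V ℝ}
    (hA : A ∈ PsetG G univ) : A ⊙ A ∈ PsetG G (Ici 0) := by
  refine ⟨hA.1.hadamard hA.1, fun i j => mul_self_nonneg (A i j), fun i j hij h => ?_⟩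
  simp [hA.2.2 i j hij h]

/-- Any sign pattern on the entrywise `α`-th powers, `2 ≤ α`, preserves `P_G(ℝ)` for bipartite
`G`, provided nonnegative numbers keep their sign. -/
lemma map_mem_PsetG_of_two_le {V : Type*} [Fintype V] {G : SimpleGraph V}
    (hbip : G.Colorable 2) {α : ℝ} (hα : 2 ≤ α) {f : ℝ → ℝ}
    (hf : ∀ x, 0 ≤ x → f x = powEnt α x) (hf' : ∀ x, |f x| = phiF α x)
    {A : Matrix V V ℝ} (hA : A ∈ PsetG G univ) : A.map f ∈ PsetG G univ := by
  refine ⟨posSemidef_of_abs_eq_powEnt hbip (α := α / 2) (by linarith)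
    (hadamard_self_mem_PsetG hA) ?_ ?_ ?_, fun _ _ => mem_univ _,
    map_apply_eq_zero_of_mem_PsetG hA ((hf 0 le_rfl).trans (powEnt_zero α))⟩
  · intro i j
    simp [apply_comm_of_mem_PsetG hA i j]
  · intro i
    have h : 0 ≤ A i i := hA.1.diag_nonneg
    rw [Matrix.map_apply, Matrix.hadamard_apply, powEnt_half_mul_self, hf _ h, phiF_of_nonneg α h]
  · intro i j
    rw [Matrix.map_apply, Matrix.hadamard_apply, powEnt_half_mul_self, hf']

lemma Ici_two_subset_HsetPhi {V : Type*} [Fintype V] {G : SimpleGraph V}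
    (hbip : G.Colorable 2) : Ici (2 : ℝ) ⊆ HsetPhi G := fun α hα _ hA =>
  map_mem_PsetG_of_two_le hbip hα (fun _ hx => phiF_of_nonneg α hx)
    (fun x => abs_of_nonneg (phiF_nonneg α x)) hA

lemma Ici_two_subset_HsetPsi {V : Type*} [Fintype V] {G : SimpleGraph V}
    (hbip : G.Colorable 2) : Ici (2 : ℝ) ⊆ HsetPsi G := fun α hα _ hA =>
  map_mem_PsetG_of_two_le hbip hα (fun _ hx => psiF_of_nonneg α hx) (abs_psiF α) hA

lemma one_mem_HsetPsi {V : Type*} [Fintype V] (G : SimpleGraph V) : (1 : ℝ) ∈ HsetPsi G := by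
  intro A hA
  have : A.map (psiF 1) = A := by
    ext i j
    simp [psiF_one]
  rwa [this]

lemma mem_HsetG_of_forall {V : Type*} [Fintype V] {G : SimpleGraph V} {α : ℝ} {f : ℝ → ℝ}
    (hf : ∀ x, 0 ≤ x → f x = powEnt α x)
    (h : ∀ A ∈ PsetG G univ, A.map f ∈ PsetG G univ) : α ∈ HsetG G := by
  intro A hA
  have : A.map (powEnt α) = A.map f := by
    ext i j
    simp [hf _ (hA.2.1 i j)]
  rw [this]
  exact h A ⟨hA.1, fun _ _ => mem_univ _, hA.2.2⟩

lemma HsetPhi_subset_HsetG {V : Type*} [Fintype V] (G : SimpleGraph V) :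
    HsetPhi G ⊆ HsetG G := fun α h => mem_HsetG_of_forall (fun _ hx => phiF_of_nonneg α hx) h

lemma HsetPsi_subset_HsetG {V : Type*} [Fintype V] (G : SimpleGraph V) :
    HsetPsi G ⊆ HsetG G := fun α h => mem_HsetG_of_forall (fun _ hx => psiF_of_nonneg α hx) h

/-- A sum of two real rank-one squares is positive semidefinite. -/
lemma posSemidef_vecMulVec_add_vecMulVec {V : Type*} [Fintype V] (u w : V → ℝ) :
    (vecMulVec u u + vecMulVec w w).PosSemidef := by
  simpa using (Matrix.posSemidef_vecMulVec_self_star u).add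
    (Matrix.posSemidef_vecMulVec_self_star w)

/-- A connected graph with at least three vertices has a vertex with two distinct neighbours. -/
lemma exists_two_neighbors {V : Type*} [Fintype V] {G : SimpleGraph V}
    (hconn : G.Connected) (hcard : 3 ≤ Fintype.card V) :
    ∃ v a b : V, a ≠ b ∧ G.Adj v a ∧ G.Adj v b := by
  classical
  by_contra! h
  have hnt : Nontrivial V := Fintype.one_lt_card_iff_nontrivial.mp (by omega)
  obtain ⟨v⟩ := hconn.nonempty
  obtain ⟨a, hva⟩ := hconn.preconnected.exists_adj_of_nontrivial v
  have hreach : ∀ x, x = v ∨ x = a := by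
    intro x
    obtain ⟨p⟩ := hconn.preconnected x v
    induction p with
    | nil => exact .inl rfl
    | cons hxy _ ih =>
      rcases ih hva with rfl | rfl
      · exact .inr (by_contra fun hne => h _ _ _ hne hxy.symm hva)
      · exact .inl (by_contra fun hne => h _ _ _ hne hxy.symm hva.symm)
  have : (Finset.univ : Finset V) ⊆ {v, a} := fun x _ => by simpa using hreach x
  have := (Finset.card_le_card this).trans Finset.card_le_two
  rw [Finset.card_univ] at this
  omega

lemma HsetG_subset_Ici_one {V : Type*} [Fintype V] {G : SimpleGraph V}
    (hconn : G.Connected) (hcard : 3 ≤ Fintype.card V) : HsetG G ⊆ Ici (1 : ℝ) := by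
  classical
  obtain ⟨v, a, b, hab, hva, hvb⟩ := exists_two_neighbors hconn hcard
  intro α hα
  have hA : vecMulVec (Pi.single v 1 + Pi.single a 1) (Pi.single v 1 + Pi.single a 1) +
      vecMulVec (Pi.single v 1 + Pi.single b 1) (Pi.single v 1 + Pi.single b 1) ∈
      PsetG G (Ici (0 : ℝ)) := by
    refine ⟨posSemidef_vecMulVec_add_vecMulVec _ _, fun i j => ?_, fun i j hij h => ?_⟩
    · simp only [Matrix.add_apply, vecMulVec_apply, Pi.add_apply, Pi.single_apply, mem_Ici]
      positivity
    · simp only [Matrix.add_apply, vecMulVec_apply, Pi.add_apply, Pi.single_apply]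
      grind [G.adj_comm]
  have h := ((hα _ hA).1.submatrix ![v, a, b]).sum_nonneg ![1, -1, -1]
  have h1 := hva.ne
  have h2 := hvb.ne
  simp [Fin.sum_univ_three, vecMulVec_apply, Pi.single_apply, h1, h2, hab, h1.symm, h2.symm,
    hab.symm, powEnt] at h
  norm_num at h
  by_contra hlt
  have h3 : (2 : ℝ) ^ α < 2 ^ (1 : ℝ) :=
    Real.rpow_lt_rpow_of_exponent_lt (by norm_num) (not_le.mp hlt)
  rw [Real.rpow_one] at h3
  linarith

/-- If `G` contains a four-cycle, then `φ_α` can only preserve `P_G(ℝ)` for `2 ≤ α`. -/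
lemma HsetPhi_subset_Ici_two {V : Type*} [Fintype V] {G : SimpleGraph V} {a b c d : V}
    (hab : a ≠ b) (hcd : c ≠ d) (hac : G.Adj a c) (had : G.Adj a d) (hbc : G.Adj b c)
    (hbd : G.Adj b d) : HsetPhi G ⊆ Ici (2 : ℝ) := by
  classical
  intro α hα
  have h1 := hac.ne
  have h2 := had.ne
  have h3 := hbc.ne
  have h4 := hbd.ne
  have hA : vecMulVec (Pi.single a 1 + Pi.single b 1 + Pi.single c 1)
        (Pi.single a 1 + Pi.single b 1 + Pi.single c 1) +
      vecMulVec (Pi.single a 1 - Pi.single b 1 + Pi.single d 1)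
        (Pi.single a 1 - Pi.single b 1 + Pi.single d 1) ∈ PsetG G (univ : Set ℝ) := by
    refine ⟨posSemidef_vecMulVec_add_vecMulVec _ _, fun _ _ => mem_univ _, fun i j hij h => ?_⟩
    simp only [Matrix.add_apply, vecMulVec_apply, Pi.add_apply, Pi.sub_apply, Pi.single_apply]
    grind [G.adj_comm]
  have h := ((hα _ hA).1.submatrix ![a, b, c, d]).sum_nonneg ![1, 1, -2, -2]
  simp [Fin.sum_univ_four, vecMulVec_apply, Pi.single_apply, h1, h2, h3, h4, hab, hcd, h1.symm,
    h2.symm, h3.symm, h4.symm, hab.symm, hcd.symm, phiF] at h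
  norm_num at h
  by_contra hlt
  have h5 : (2 : ℝ) ^ α < 2 ^ (2 : ℝ) :=
    Real.rpow_lt_rpow_of_exponent_lt (by norm_num) (not_le.mp hlt)
  norm_num at h5
  linarith

/-- **Theorem 4.10 (bipartite graphs)**: for a connected bipartite graph `G` with at least 3
vertices, `H_G = [1,∞)`, `[2,∞) ⊆ H_G^φ ⊆ [1,∞)` and `{1} ∪ [3,∞) ⊆ H_G^ψ ⊆ [1,∞)`.
If moreover `K_{2,2} ⊆ G ⊆ K_{2,m}` (there are two vertices `a ≠ b` such that every edge of
`G` joins `{a,b}` to its complement, and `G` contains a `K_{2,2}` on `a, b` and two other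
vertices), then `H_G^φ = [2,∞)` and `{1} ∪ [2,∞) ⊆ H_G^ψ ⊆ [1,∞)`. -/
theorem Hsets_bipartite {V : Type*} [Fintype V] [DecidableEq V] (G : SimpleGraph V)
    (hconn : G.Connected) (hbip : G.Colorable 2) (hcard : 3 ≤ Fintype.card V) :
    (HsetG G = Ici (1 : ℝ)) ∧
    (Ici (2 : ℝ) ⊆ HsetPhi G ∧ HsetPhi G ⊆ Ici (1 : ℝ)) ∧
    ({(1 : ℝ)} ∪ Ici (3 : ℝ) ⊆ HsetPsi G ∧ HsetPsi G ⊆ Ici (1 : ℝ)) ∧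
    ((∃ a b : V, a ≠ b ∧
        (∀ x y, G.Adj x y → ((x = a ∨ x = b) ↔ ¬(y = a ∨ y = b))) ∧
        (∃ c d : V, c ≠ d ∧ c ≠ a ∧ c ≠ b ∧ d ≠ a ∧ d ≠ b ∧
          G.Adj a c ∧ G.Adj a d ∧ G.Adj b c ∧ G.Adj b d)) →
      HsetPhi G = Ici (2 : ℝ) ∧
      {(1 : ℝ)} ∪ Ici (2 : ℝ) ⊆ HsetPsi G ∧ HsetPsi G ⊆ Ici (1 : ℝ)) := by
  have hG := HsetG_subset_Ici_one hconn hcard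
  have hphi := Ici_two_subset_HsetPhi hbip
  have hpsi : {(1 : ℝ)} ∪ Ici (2 : ℝ) ⊆ HsetPsi G :=
    union_subset (singleton_subset_iff.mpr (one_mem_HsetPsi G)) (Ici_two_subset_HsetPsi hbip)
  have hpsi' := (HsetPsi_subset_HsetG G).trans hG
  refine ⟨hG.antisymm (Ici_one_subset_HsetG hbip), ⟨hphi, (HsetPhi_subset_HsetG G).trans hG⟩,
    ⟨(union_subset_union_right _ (Ici_subset_Ici.mpr (by norm_num))).trans hpsi, hpsi'⟩, ?_⟩
  rintro ⟨a, b, hab, -, c, d, hcd, -, -, -, -, hac, had, hbc, hbd⟩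
  exact ⟨(HsetPhi_subset_Ici_two hab hcd hac had hbc hbd).antisymm hphi, hpsi, hpsi'⟩
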